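/- Let u be a word with maximum entry m, and suppose u contains a decreasing subsequence m, m-1, ..., m-k+1. If w ∈ C(u), then every entry in the first k rows of the insertion tableau P(w) is at most m. -/

import Mathlib

namespace Plactic

/-- Insert `x` into a weakly increasing row, returning the new row and the bumped entry. -/
def rowInsert (x : ℕ) : List ℕ → List ℕ × Option ℕ
  | [] => ([x], none)
  | y :: ys =>
    if x < y then (x :: ys, some y)
    else
      let p := rowInsert x ys
      (y :: p.1, p.2)

/-- RSK insertion of `x` into a tableau given as a list of rows. -/
def tInsert (x : ℕ) : List (List ℕ) → List (List ℕ)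
  | [] => [[x]]
  | r :: rs =>
    match rowInsert x r with
    | (r', none) => r' :: rs
    | (r', some y) => r' :: tInsert y rs

/-- The RSK insertion tableau of a word. -/
def P (w : List ℕ) : List (List ℕ) := w.foldl (fun t x => tInsert x t) []

/-- The `i`-th row (0-indexed) of the insertion tableau of `w`. -/
def row (w : List ℕ) (i : ℕ) : List ℕ := (P w).getD i []

/-- The `j`-th column (0-indexed) of a tableau, read top to bottom. -/
def col (T : List (List ℕ)) (j : ℕ) : List ℕ := T.filterMap (fun r => r[j]?)

/-- An elementary Knuth transposition. -/
inductive KStep : List ℕ → List ℕ → Prop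
  | k1 (x y : List ℕ) (a b c : ℕ) : a ≤ b → b < c →
      KStep (x ++ [a, c, b] ++ y) (x ++ [c, a, b] ++ y)
  | k2 (x y : List ℕ) (a b c : ℕ) : a < b → b ≤ c →
      KStep (x ++ [b, a, c] ++ y) (x ++ [b, c, a] ++ y)

/-- Knuth equivalence: the equivalence relation generated by Knuth transpositions. -/
def KEquiv : List ℕ → List ℕ → Prop := Relation.EqvGen KStep

/-- The centralizer of `u` in the plactic monoid. -/
def Cent (u : List ℕ) : Set (List ℕ) := {w | KEquiv (u ++ w) (w ++ u)}

end Plactic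

namespace Plactic

/-!
Write `N j` for the number of entries greater than `m` in the first `j` rows of the insertion
tableau.

Prepending a word never decreases `N j`: a word is Knuth equivalent to the word it bumps into the
second row followed by its own first row, and inserting a weakly increasing word `r` into a row
bumps only a subword of that row, so the large letters of `r` enter the tableau while each row
hands on at most the large entries it already had.

Appending `u` lowers `N j` for some `j ≤ k` if one of the first `k` rows has a large entry. Indeed,
whether a word contains a given run of consecutive decreasing letters as a subword is invariant
under Knuth equivalence. Hence when `u` runs through a row, the run `m, m - 1, …` it contains
reappears in the bumped word, except for its last letter, because the row itself is increasing.
So `m` reaches the first row that has a large entry and bumps a large entry out of it.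

If `uw` and `wu` are Knuth equivalent, both have the same `N j`, and the two facts clash unless the
first `k` rows have no large entry.
-/

variable {a b c k m x y : ℕ} {l s u v w R ys : List ℕ}

/-! ### Row insertion -/

theorem rowInsert_cons_of_lt (h : x < y) (ys : List ℕ) :
    rowInsert x (y :: ys) = (x :: ys, some y) :=
  if_pos h

theorem rowInsert_cons_of_le (h : y ≤ x) (ys : List ℕ) :
    rowInsert x (y :: ys) = (y :: (rowInsert x ys).1, (rowInsert x ys).2) :=
  if_neg h.not_gt

theorem rowInsert_perm (x : ℕ) (R : List ℕ) :
    ((rowInsert x R).2.toList ++ (rowInsert x R).1).Perm (x :: R) := by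
  induction R with
  | nil => exact .refl _
  | cons y ys ih =>
    rcases lt_or_ge x y with h | h
    · rw [rowInsert_cons_of_lt h]
      exact .swap x y ys
    · rw [rowInsert_cons_of_le h]
      exact List.perm_middle.trans ((ih.cons y).trans (.swap x y ys))

theorem self_mem_rowInsert (x : ℕ) (R : List ℕ) : x ∈ (rowInsert x R).1 := by
  induction R with
  | nil => exact List.mem_singleton_self x
  | cons y ys ih =>
    rcases lt_or_ge x y with h | h
    · simp only [rowInsert_cons_of_lt h, List.mem_cons_self]
    · simp only [rowInsert_cons_of_le h, List.mem_cons_of_mem y ih]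

theorem pairwise_rowInsert (hR : R.Pairwise (· ≤ ·)) (x : ℕ) :
    (rowInsert x R).1.Pairwise (· ≤ ·) := by
  induction R with
  | nil => exact List.pairwise_singleton _ x
  | cons y ys ih =>
    obtain ⟨hy, hys⟩ := List.pairwise_cons.mp hR
    rcases lt_or_ge x y with h | h
    · rw [rowInsert_cons_of_lt h]
      exact List.pairwise_cons.mpr ⟨fun z hz => h.le.trans (hy z hz), hys⟩
    · rw [rowInsert_cons_of_le h]
      refine List.pairwise_cons.mpr ⟨fun z hz => ?_, ih hys⟩
      rcases List.mem_cons.mp ((rowInsert_perm x ys).subset (List.mem_append_right _ hz)) with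
        rfl | hz
      exacts [h, hy z hz]

theorem le_of_mem_rowInsert_tail (hR : (y :: ys).Pairwise (· ≤ ·)) (hyx : y ≤ x) {z : ℕ}
    (hz : z ∈ (rowInsert x ys).1) : y ≤ z := by
  have hR' := pairwise_rowInsert hR x
  rw [rowInsert_cons_of_le hyx] at hR'
  exact List.rel_of_pairwise_cons hR' hz

theorem exists_mem_of_rowInsert_eq_some {o : ℕ} (h : (rowInsert x R).2 = some o) :
    o ∈ R ∧ x < o := by
  induction R with
  | nil => cases h
  | cons y ys ih =>
    rcases lt_or_ge x y with hxy | hyx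
    · rw [rowInsert_cons_of_lt hxy, Option.some_inj] at h
      exact h ▸ ⟨List.mem_cons_self, hxy⟩
    · rw [rowInsert_cons_of_le hyx] at h
      exact (ih h).imp_left (List.mem_cons_of_mem y)

theorem exists_rowInsert_eq_some {z : ℕ} (hR : R.Pairwise (· ≤ ·)) (hz : z ∈ R) (hxz : x < z) :
    ∃ o, (rowInsert x R).2 = some o ∧ o ≤ z := by
  induction R with
  | nil => cases hz
  | cons y ys ih =>
    obtain ⟨hy, hys⟩ := List.pairwise_cons.mp hR
    rcases lt_or_ge x y with hxy | hyx
    · refine ⟨y, by rw [rowInsert_cons_of_lt hxy], ?_⟩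
      rcases List.mem_cons.mp hz with rfl | hz
      exacts [le_rfl, hy z hz]
    · rw [rowInsert_cons_of_le hyx]
      rcases List.mem_cons.mp hz with rfl | hz
      exacts [absurd hxz hyx.not_gt, ih hys hz]

theorem exists_rowInsert_eq_some_le (hR : R.Pairwise (· ≤ ·)) (hab : a ≤ b) {o : ℕ}
    (ho : (rowInsert b (rowInsert a R).1).2 = some o) :
    ∃ p, (rowInsert a R).2 = some p ∧ p ≤ o := by
  obtain ⟨ho_mem, hbo⟩ := exists_mem_of_rowInsert_eq_some ho
  have ho_mem := (rowInsert_perm a R).subset (List.mem_append_right _ ho_mem)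
  exact exists_rowInsert_eq_some hR (List.mem_of_ne_of_mem (hab.trans_lt hbo).ne' ho_mem)
    (hab.trans_lt hbo)

/-! ### Inserting a word into a row -/

/-- The row obtained from the row `R` by inserting the letters of a word from left to right,
forgetting the bumped entries. -/
def rowInsertWord (R : List ℕ) : List ℕ → List ℕ
  | [] => R
  | x :: w => rowInsertWord (rowInsert x R).1 w

/-- The word formed by the entries bumped out of the row `R` while the letters of a word are
inserted from left to right: this is the word entering the next row of the tableau. -/
def bumpedWord (R : List ℕ) : List ℕ → List ℕ
  | [] => []
  | x :: w => (rowInsert x R).2.toList ++ bumpedWord (rowInsert x R).1 w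

theorem rowInsertWord_append (R v w : List ℕ) :
    rowInsertWord R (v ++ w) = rowInsertWord (rowInsertWord R v) w := by
  induction v generalizing R with
  | nil => rfl
  | cons _ _ ih => exact ih _

theorem bumpedWord_append (R v w : List ℕ) :
    bumpedWord R (v ++ w) = bumpedWord R v ++ bumpedWord (rowInsertWord R v) w := by
  induction v generalizing R with
  | nil => rfl
  | cons x v ih => simp only [List.cons_append, bumpedWord, rowInsertWord, ih, List.append_assoc]

theorem pairwise_rowInsertWord (hR : R.Pairwise (· ≤ ·)) (w : List ℕ) :
    (rowInsertWord R w).Pairwise (· ≤ ·) := by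
  induction w generalizing R with
  | nil => exact hR
  | cons x _ ih => exact ih (pairwise_rowInsert hR x)

theorem bumpedWord_append_rowInsertWord_perm (R w : List ℕ) :
    (bumpedWord R w ++ rowInsertWord R w).Perm (R ++ w) := by
  induction w generalizing R with
  | nil => simp only [bumpedWord, rowInsertWord, List.nil_append, List.append_nil, List.Perm.refl]
  | cons x w ih =>
    rw [bumpedWord, rowInsertWord, List.append_assoc]
    refine ((ih _).append_left _).trans ?_
    rw [← List.append_assoc]
    exact ((rowInsert_perm x R).append_right w).trans List.perm_middle.symm

theorem countP_bumpedWord_add_countP_rowInsertWord (p : ℕ → Bool) (R w : List ℕ) :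
    (bumpedWord R w).countP p + (rowInsertWord R w).countP p = R.countP p + w.countP p := by
  rw [← List.countP_append, ← List.countP_append,
    (bumpedWord_append_rowInsertWord_perm R w).countP_eq]

theorem rowInsertWord_cons_of_le (hw : ∀ x ∈ w, y ≤ x) (ys : List ℕ) :
    rowInsertWord (y :: ys) w = y :: rowInsertWord ys w := by
  induction w generalizing ys with
  | nil => rfl
  | cons x w ih =>
    obtain ⟨hx, hw⟩ := List.forall_mem_cons.mp hw
    simp only [rowInsertWord, rowInsert_cons_of_le hx, ih hw]

theorem bumpedWord_cons_of_le (hw : ∀ x ∈ w, y ≤ x) (ys : List ℕ) :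
    bumpedWord (y :: ys) w = bumpedWord ys w := by
  induction w generalizing ys with
  | nil => rfl
  | cons x w ih =>
    obtain ⟨hx, hw⟩ := List.forall_mem_cons.mp hw
    simp only [bumpedWord, rowInsert_cons_of_le hx, ih hw]

theorem bumpedWord_nil_of_pairwise (hw : w.Pairwise (· ≤ ·)) : bumpedWord [] w = [] := by
  induction w with
  | nil => rfl
  | cons x w ih =>
    obtain ⟨hx, hw⟩ := List.pairwise_cons.mp hw
    exact (bumpedWord_cons_of_le hx []).trans (ih hw)

theorem bumpedWord_sublist_of_pairwise (hw : w.Pairwise (· ≤ ·)) (R : List ℕ) :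
    (bumpedWord R w).Sublist R := by
  induction R generalizing w with
  | nil => rw [bumpedWord_nil_of_pairwise hw]
  | cons y ys ih =>
    cases w with
    | nil => exact List.nil_sublist _
    | cons x w =>
      obtain ⟨hx, hw'⟩ := List.pairwise_cons.mp hw
      rcases lt_or_ge x y with hxy | hyx
      · simpa only [bumpedWord, rowInsert_cons_of_lt hxy, bumpedWord_cons_of_le hx,
          Option.toList_some, List.singleton_append, List.cons_sublist_cons] using ih hw'
      · rw [bumpedWord_cons_of_le
          (List.forall_mem_cons.mpr ⟨hyx, fun z hz => hyx.trans (hx z hz)⟩)]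
        exact (ih hw).cons y

theorem exists_mem_bumpedWord_lt (hR : R.Pairwise (· ≤ ·)) {z : ℕ} (hz : z ∈ R) (hx : x ∈ w)
    (hxz : x < z) : ∃ e ∈ bumpedWord R w, x < e := by
  obtain ⟨w₁, w₂, rfl⟩ := List.append_of_mem hx
  simp only [bumpedWord_append, bumpedWord, List.mem_append, Option.mem_toList]
  rcases List.mem_append.mp ((bumpedWord_append_rowInsertWord_perm R w₁).symm.subset
    (List.mem_append_left w₁ hz)) with hz | hz
  · exact ⟨z, .inl hz, hxz⟩
  · obtain ⟨e, he, -⟩ := exists_rowInsert_eq_some (pairwise_rowInsertWord hR w₁) hz hxz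
    exact ⟨e, .inr (.inl he), (exists_mem_of_rowInsert_eq_some he).2⟩

theorem foldl_tInsert_cons (w R : List ℕ) (T : List (List ℕ)) :
    w.foldl (fun t x => tInsert x t) (R :: T) =
      rowInsertWord R w :: (bumpedWord R w).foldl (fun t x => tInsert x t) T := by
  induction w generalizing R T with
  | nil => rfl
  | cons x w ih =>
    rw [List.foldl_cons, tInsert]
    rcases h : rowInsert x R with ⟨R', _ | y⟩ <;> simp [ih, rowInsertWord, bumpedWord, h]

theorem P_cons (x : ℕ) (w : List ℕ) :
    P (x :: w) = rowInsertWord [] (x :: w) :: P (bumpedWord [] (x :: w)) :=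
  foldl_tInsert_cons w [x] []

theorem row_zero (w : List ℕ) : row w 0 = rowInsertWord [] w := by
  cases w with
  | nil => rfl
  | cons x w => rw [row, P_cons, List.getD_cons_zero]

theorem row_succ (w : List ℕ) (i : ℕ) : row w (i + 1) = row (bumpedWord [] w) i := by
  cases w with
  | nil => rfl
  | cons x w => rw [row, P_cons, List.getD_cons_succ, row]

/-! ### Knuth equivalence -/

theorem KEquiv.refl (u : List ℕ) : KEquiv u u := Relation.EqvGen.refl u

theorem KEquiv.symm (h : KEquiv u v) : KEquiv v u := Relation.EqvGen.symm _ _ h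

theorem KEquiv.trans (h : KEquiv u v) (h' : KEquiv v w) : KEquiv u w :=
  Relation.EqvGen.trans _ _ _ h h'

theorem KEquiv.lift {r : List ℕ → List ℕ → Prop} (hr : Equivalence r)
    (hstep : ∀ u v, KStep u v → r u v) (h : KEquiv u v) : r u v :=
  hr.eqvGen_iff.mp (Relation.EqvGen.mono hstep _ _ h)

theorem KStep.append (h : KStep u v) (s t : List ℕ) : KStep (s ++ u ++ t) (s ++ v ++ t) := by
  cases h with
  | k1 x y a b c hab hbc => simpa using KStep.k1 (s ++ x) (y ++ t) a b c hab hbc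
  | k2 x y a b c hab hbc => simpa using KStep.k2 (s ++ x) (y ++ t) a b c hab hbc

theorem KEquiv.append (h : KEquiv u v) (s t : List ℕ) :
    KEquiv (s ++ u ++ t) (s ++ v ++ t) :=
  h.lift (r := fun u v => KEquiv (s ++ u ++ t) (s ++ v ++ t))
    ((Relation.EqvGen.is_equivalence KStep).comap (s ++ · ++ t))
    fun _ _ h => .rel _ _ (h.append s t)

theorem KEquiv.append_left (h : KEquiv u v) (s : List ℕ) : KEquiv (s ++ u) (s ++ v) := by
  simpa only [List.append_nil] using h.append s []

theorem KEquiv.append_right (h : KEquiv u v) (t : List ℕ) : KEquiv (u ++ t) (v ++ t) :=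
  h.append [] t

theorem KEquiv.k1 (hab : a ≤ b) (hbc : b < c) (t : List ℕ) :
    KEquiv (a :: c :: b :: t) (c :: a :: b :: t) :=
  .rel _ _ (.k1 [] t a b c hab hbc)

theorem KEquiv.k2 (hab : a < b) (hbc : b ≤ c) (t : List ℕ) :
    KEquiv (b :: a :: c :: t) (b :: c :: a :: t) :=
  .rel _ _ (.k2 [] t a b c hab hbc)

theorem kEquiv_cons_append_singleton (hxy : x < y) (hR : (y :: ys).Pairwise (· ≤ ·)) :
    KEquiv (y :: (ys ++ [x])) (y :: x :: ys) := by
  induction ys generalizing y with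
  | nil => exact .refl _
  | cons z zs ih =>
    have hyz : y ≤ z := List.rel_of_pairwise_cons hR List.mem_cons_self
    exact ((ih (hxy.trans_le hyz) hR.of_cons).append_left [y]).trans (KEquiv.k2 hxy hyz zs).symm

theorem kEquiv_rowInsert (hR : R.Pairwise (· ≤ ·)) (x : ℕ) :
    KEquiv (R ++ [x]) ((rowInsert x R).2.toList ++ (rowInsert x R).1) := by
  induction R with
  | nil => exact .refl _
  | cons y ys ih =>
    rcases lt_or_ge x y with hxy | hyx
    · rw [rowInsert_cons_of_lt hxy]
      exact kEquiv_cons_append_singleton hxy hR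
    have hcons := (ih hR.of_cons).append_left [y]
    rw [rowInsert_cons_of_le hyx]
    rcases ho : (rowInsert x ys).2 with _ | o
    · rwa [ho] at hcons
    have hx := self_mem_rowInsert x ys
    have hsorted := pairwise_rowInsert hR.of_cons x
    have hle := fun z => le_of_mem_rowInsert_tail hR hyx (z := z)
    rcases hzs : (rowInsert x ys).1 with _ | ⟨z, zs⟩ <;> rw [hzs] at hx hsorted hle
    · cases hx
    have hzx : z ≤ x := by
      rcases List.mem_cons.mp hx with rfl | hx
      exacts [le_rfl, List.rel_of_pairwise_cons hsorted hx]
    rw [ho, hzs] at hcons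
    exact hcons.trans (.k1 (hle z List.mem_cons_self)
      (hzx.trans_lt (exists_mem_of_rowInsert_eq_some ho).2) zs)

theorem kEquiv_bumpedWord_append_rowInsertWord (hR : R.Pairwise (· ≤ ·)) (w : List ℕ) :
    KEquiv (R ++ w) (bumpedWord R w ++ rowInsertWord R w) := by
  induction w generalizing R with
  | nil =>
    simpa only [bumpedWord, rowInsertWord, List.append_nil, List.nil_append] using KEquiv.refl R
  | cons x w ih =>
    have hx := (kEquiv_rowInsert hR x).append_right w
    have hw := (ih (pairwise_rowInsert hR x)).append_left (rowInsert x R).2.toList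
    simp only [List.append_assoc, List.singleton_append] at hx
    simpa only [bumpedWord, rowInsertWord, List.append_assoc] using hx.trans hw

/-! ### Knuth invariance of the rows -/

/-- Two words act alike on the row `R` if inserting them into `R` yields the same row and bumps
Knuth equivalent words into the next row. -/
def ActAlike (R u v : List ℕ) : Prop :=
  rowInsertWord R u = rowInsertWord R v ∧ KEquiv (bumpedWord R u) (bumpedWord R v)

theorem equivalence_actAlike (R : List ℕ) : Equivalence (ActAlike R) where
  refl _ := ⟨rfl, .refl _⟩
  symm h := ⟨h.1.symm, h.2.symm⟩
  trans h h' := ⟨h.1.trans h'.1, h.2.trans h'.2⟩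

theorem ActAlike.append (h : ActAlike (rowInsertWord R s) u v) (t : List ℕ) :
    ActAlike R (s ++ u ++ t) (s ++ v ++ t) := by
  simp only [ActAlike, rowInsertWord_append, bumpedWord_append, h.1, true_and]
  exact h.2.append _ _

theorem ActAlike.cons_of_le (hu : ∀ x ∈ u, y ≤ x) (hv : ∀ x ∈ v, y ≤ x) (h : ActAlike ys u v) :
    ActAlike (y :: ys) u v := by
  rw [ActAlike, rowInsertWord_cons_of_le hu, rowInsertWord_cons_of_le hv,
    bumpedWord_cons_of_le hu, bumpedWord_cons_of_le hv, h.1]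
  exact ⟨rfl, h.2⟩

theorem actAlike_k1_cons_of_lt (hab : a ≤ b) (hbc : b < c) (hcy : c < y)
    (hR : (y :: ys).Pairwise (· ≤ ·)) : ActAlike (y :: ys) [a, c, b] [c, a, b] := by
  have hac : a < c := hab.trans_lt hbc
  cases ys with
  | nil =>
    simp [ActAlike, rowInsertWord, bumpedWord, rowInsert, hac.trans hcy, hcy, hac, hbc,
      hab.not_gt, hac.not_gt, KEquiv.refl]
  | cons z zs =>
    have hyz : y ≤ z := List.rel_of_pairwise_cons hR List.mem_cons_self
    simp only [ActAlike, rowInsertWord, bumpedWord, rowInsert_cons_of_lt (hac.trans hcy),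
      rowInsert_cons_of_lt hcy, rowInsert_cons_of_lt hac, rowInsert_cons_of_le hac.le,
      rowInsert_cons_of_le hab, rowInsert_cons_of_lt hbc,
      rowInsert_cons_of_lt (hcy.trans_le hyz),
      rowInsert_cons_of_lt (hbc.trans (hcy.trans_le hyz)), true_and]
    exact (KEquiv.k2 hcy hyz []).symm

theorem actAlike_k1_cons_of_lt_of_le (hab : a ≤ b) (hbc : b < c) (hay : a < y) (hyc : y ≤ c)
    (hR : (y :: ys).Pairwise (· ≤ ·)) : ActAlike (y :: ys) [a, c, b] [c, a, b] := by
  simp only [ActAlike, rowInsertWord, bumpedWord, rowInsert_cons_of_lt hay,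
    rowInsert_cons_of_le hyc, rowInsert_cons_of_le (hab.trans hbc.le), rowInsert_cons_of_le hab,
    List.append_nil, true_and]
  rcases ho : (rowInsert c ys).2 with _ | o
  · exact .refl _
  obtain ⟨e, he, hec⟩ := exists_rowInsert_eq_some (pairwise_rowInsert hR.of_cons c)
    (self_mem_rowInsert c ys) hbc
  have hye : y ≤ e := le_of_mem_rowInsert_tail hR hyc (exists_mem_of_rowInsert_eq_some he).1
  rw [he]
  exact .k1 hye (hec.trans_lt (exists_mem_of_rowInsert_eq_some ho).2) []

theorem actAlike_k1 (hab : a ≤ b) (hbc : b < c) (hR : R.Pairwise (· ≤ ·)) :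
    ActAlike R [a, c, b] [c, a, b] := by
  have hac : a < c := hab.trans_lt hbc
  induction R with
  | nil =>
    simp [ActAlike, rowInsertWord, bumpedWord, rowInsert, hac, hac.not_gt, hab.not_gt, hbc,
      KEquiv.refl]
  | cons y ys ih =>
    rcases le_or_gt y a with hya | hay
    · have hyb := hya.trans hab
      have hyc := hya.trans hac.le
      exact (ih hR.of_cons).cons_of_le (by simp [*]) (by simp [*])
    · rcases lt_or_ge c y with hcy | hyc
      exacts [actAlike_k1_cons_of_lt hab hbc hcy hR,
        actAlike_k1_cons_of_lt_of_le hab hbc hay hyc hR]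

theorem actAlike_k2_cons_of_lt (hab : a < b) (hbc : b ≤ c) (hby : b < y)
    (hR : (y :: ys).Pairwise (· ≤ ·)) : ActAlike (y :: ys) [b, a, c] [b, c, a] := by
  simp only [ActAlike, rowInsertWord, bumpedWord, rowInsert_cons_of_lt hby,
    rowInsert_cons_of_lt hab, rowInsert_cons_of_le hbc, rowInsert_cons_of_le (hab.le.trans hbc),
    List.append_nil, true_and]
  rcases ho : (rowInsert c ys).2 with _ | o
  · exact .refl _
  · exact .k2 hby (List.rel_of_pairwise_cons hR (exists_mem_of_rowInsert_eq_some ho).1) []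

theorem actAlike_k2_cons_of_lt_of_le (hab : a < b) (hbc : b ≤ c) (hay : a < y) (hyb : y ≤ b)
    (hR : (y :: ys).Pairwise (· ≤ ·)) : ActAlike (y :: ys) [b, a, c] [b, c, a] := by
  simp only [ActAlike, rowInsertWord, bumpedWord, rowInsert_cons_of_lt hay,
    rowInsert_cons_of_le hyb, rowInsert_cons_of_le (hyb.trans hbc),
    rowInsert_cons_of_le (hab.le.trans hbc), List.append_nil, true_and]
  rcases hp : (rowInsert c (rowInsert b ys).1).2 with _ | p
  · exact .refl _
  obtain ⟨o, ho, hop⟩ := exists_rowInsert_eq_some_le hR.of_cons hbc hp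
  rw [ho]
  exact .k2 (hyb.trans_lt (exists_mem_of_rowInsert_eq_some ho).2) hop []

theorem actAlike_k2 (hab : a < b) (hbc : b ≤ c) (hR : R.Pairwise (· ≤ ·)) :
    ActAlike R [b, a, c] [b, c, a] := by
  have hac : a < c := hab.trans_le hbc
  induction R with
  | nil =>
    simp [ActAlike, rowInsertWord, bumpedWord, rowInsert, hab, hac.not_gt, hbc.not_gt,
      KEquiv.refl]
  | cons y ys ih =>
    rcases le_or_gt y a with hya | hay
    · have hyb := hya.trans hab.le
      have hyc := hya.trans hac.le
      exact (ih hR.of_cons).cons_of_le (by simp [*]) (by simp [*])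
    · rcases lt_or_ge b y with hby | hyb
      exacts [actAlike_k2_cons_of_lt hab hbc hby hR,
        actAlike_k2_cons_of_lt_of_le hab hbc hay hyb hR]

theorem KEquiv.actAlike (h : KEquiv u v) (hR : R.Pairwise (· ≤ ·)) : ActAlike R u v :=
  h.lift (equivalence_actAlike R) fun _ _ h => by
    cases h with
    | k1 s t a b c hab hbc => exact (actAlike_k1 hab hbc (pairwise_rowInsertWord hR s)).append t
    | k2 s t a b c hab hbc => exact (actAlike_k2 hab hbc (pairwise_rowInsertWord hR s)).append t

theorem KEquiv.row_eq (h : KEquiv u v) (i : ℕ) : row u i = row v i := by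
  induction i generalizing u v with
  | zero => simpa only [row_zero] using (h.actAlike .nil).1
  | succ i ih => simpa only [row_succ] using ih (h.actAlike .nil).2

/-! ### Subwords of consecutive decreasing letters -/

theorem sublist_append_of_isChain {α : Type*} {r : α → α → Prop} {l p q s t : List α}
    (hl : l.IsChain r) (hpq : ∀ l' : List α, l'.IsChain r → l'.Sublist p → l'.Sublist q)
    (h : l.Sublist (s ++ p ++ t)) : l.Sublist (s ++ q ++ t) := by
  obtain ⟨_, l₃, rfl, h₁₂, h₃⟩ := List.sublist_append_iff.mp h
  obtain ⟨l₁, l₂, rfl, h₁, h₂⟩ := List.sublist_append_iff.mp h₁₂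
  exact (h₁.append (hpq l₂ (hl.infix ⟨l₁, l₃, rfl⟩) h₂)).append h₃

-- The only run that sees the order of `a` and `c` is `c, a` with `c = a + 1`; then `b = a`, so
-- `c, b` is the same run.
theorem sublist_iff_k1 (hab : a ≤ b) (hbc : b < c) (hl : l.IsChain (fun x y => x = y + 1)) :
    l.Sublist [a, c, b] ↔ l.Sublist [c, a, b] := by
  simp only [List.sublist_cons_iff, List.sublist_nil]
  grind

-- Here the order of `a` and `c` matters only if `c = a + 1`, and then `b = c`.
theorem sublist_iff_k2 (hab : a < b) (hbc : b ≤ c) (hl : l.IsChain (fun x y => x = y + 1)) :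
    l.Sublist [b, a, c] ↔ l.Sublist [b, c, a] := by
  simp only [List.sublist_cons_iff, List.sublist_nil]
  grind

theorem KEquiv.sublist_iff (h : KEquiv u v) (hl : l.IsChain (fun x y => x = y + 1)) :
    l.Sublist u ↔ l.Sublist v := by
  refine h.lift (r := fun u v => l.Sublist u ↔ l.Sublist v) ⟨fun _ => .rfl, .symm, .trans⟩ ?_
  rintro _ _ (⟨s, t, a, b, c, hab, hbc⟩ | ⟨s, t, a, b, c, hab, hbc⟩)
  · exact ⟨sublist_append_of_isChain hl fun _ hl' => (sublist_iff_k1 hab hbc hl').mp,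
      sublist_append_of_isChain hl fun _ hl' => (sublist_iff_k1 hab hbc hl').mpr⟩
  · exact ⟨sublist_append_of_isChain hl fun _ hl' => (sublist_iff_k2 hab hbc hl').mp,
      sublist_append_of_isChain hl fun _ hl' => (sublist_iff_k2 hab hbc hl').mpr⟩

theorem dropLast_sublist_of_sublist_append {α : Type*} [Preorder α] {r s t : List α}
    (hs : s.Pairwise (· > ·)) (hr : r.Pairwise (· ≤ ·)) (h : s.Sublist (t ++ r)) :
    s.dropLast.Sublist t := by
  obtain ⟨s₁, s₂, rfl, h₁, h₂⟩ := List.sublist_append_iff.mp h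
  have hgt : s₂.Pairwise (· > ·) := (List.pairwise_append.mp hs).2.1
  rcases s₂ with _ | ⟨x, _ | ⟨y, l⟩⟩
  · rw [List.append_nil]
    exact (List.dropLast_sublist s₁).trans h₁
  · rwa [List.dropLast_concat]
  · have hle : x ≤ y := List.rel_of_pairwise_cons (hr.sublist h₂) List.mem_cons_self
    exact absurd (List.rel_of_pairwise_cons hgt List.mem_cons_self) hle.not_gt

/-- The word `m, m - 1, …, m - k + 1`. Because of truncated subtraction, this is a run of
consecutive decreasing letters only for `k ≤ m + 1`. -/
def descent (m k : ℕ) : List ℕ := (List.range k).map (fun i => m - i)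

theorem dropLast_descent_succ (m k : ℕ) : (descent m (k + 1)).dropLast = descent m k := by
  rw [descent, List.range_succ, List.map_append, List.map_singleton, List.dropLast_concat, descent]

theorem mem_descent_succ (m k : ℕ) : m ∈ descent m (k + 1) :=
  List.mem_map.mpr ⟨0, List.mem_range.mpr k.succ_pos, m.sub_zero⟩

theorem isChain_descent (hk : k ≤ m + 1) : (descent m k).IsChain (fun x y => x = y + 1) := by
  rw [descent, List.isChain_map, List.isChain_range]
  omega

theorem pairwise_descent (hk : k ≤ m + 1) : (descent m k).Pairwise (· > ·) :=
  ((isChain_descent hk).imp fun _ _ h => by omega).pairwise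

theorem descent_sublist_bumpedWord (hR : R.Pairwise (· ≤ ·)) (hk : k ≤ m)
    (hu : (descent m (k + 1)).Sublist u) : (descent m k).Sublist (bumpedWord R u) := by
  have hk' : k + 1 ≤ m + 1 := Nat.succ_le_succ hk
  have h : (descent m (k + 1)).Sublist (bumpedWord R u ++ rowInsertWord R u) :=
    ((kEquiv_bumpedWord_append_rowInsertWord hR u).sublist_iff (isChain_descent hk')).mp
      (hu.trans (List.sublist_append_right R u))
  rw [← dropLast_descent_succ]
  exact dropLast_sublist_of_sublist_append (pairwise_descent hk') (pairwise_rowInsertWord hR u) h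

/-! ### Large entries in the first rows -/

/-- The number of entries greater than `m` in the first `k` rows of the insertion tableau of a
word. -/
def largeCount (m k : ℕ) (w : List ℕ) : ℕ :=
  ∑ i ∈ Finset.range k, (row w i).countP (m < ·)

theorem largeCount_succ (m k : ℕ) (w : List ℕ) :
    largeCount m (k + 1) w =
      (rowInsertWord [] w).countP (m < ·) + largeCount m k (bumpedWord [] w) := by
  simp only [largeCount, Finset.sum_range_succ', row_zero, row_succ, add_comm]

theorem largeCount_pos : 0 < largeCount m k w ↔ ∃ i < k, ∃ x ∈ row w i, m < x := by
  simp only [largeCount, Finset.sum_pos_iff, Finset.mem_range, List.countP_pos_iff,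
    decide_eq_true_eq]

theorem KEquiv.largeCount_eq (m k : ℕ) (h : KEquiv u v) : largeCount m k u = largeCount m k v := by
  simp only [largeCount, h.row_eq]

theorem countP_add_largeCount_le (m k : ℕ) (v : List ℕ) (hw : w.Pairwise (· ≤ ·)) :
    w.countP (m < ·) + largeCount m k v ≤ largeCount m (k + 1) (v ++ w) := by
  induction k generalizing v w with
  | zero =>
    have hcount := countP_bumpedWord_add_countP_rowInsertWord (m < ·) (rowInsertWord [] v) w
    have hle : (bumpedWord (rowInsertWord [] v) w).countP (m < ·) ≤
        (rowInsertWord [] v).countP (m < ·) := (bumpedWord_sublist_of_pairwise hw _).countP_le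
    rw [largeCount_succ, rowInsertWord_append]
    simp only [largeCount, Finset.range_zero, Finset.sum_empty]
    omega
  | succ k ih =>
    have hcount := countP_bumpedWord_add_countP_rowInsertWord (m < ·) (rowInsertWord [] v) w
    have hnext := ih (bumpedWord [] v)
      ((pairwise_rowInsertWord .nil v).sublist (bumpedWord_sublist_of_pairwise hw _))
    rw [largeCount_succ m (k + 1), largeCount_succ m k v, rowInsertWord_append, bumpedWord_append]
    omega

theorem largeCount_le_append_left (m k : ℕ) (u w : List ℕ) :
    largeCount m k w ≤ largeCount m k (u ++ w) := by
  induction k generalizing w with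
  | zero => rfl
  | succ k ih =>
    have hw : KEquiv (u ++ w) (u ++ bumpedWord [] w ++ rowInsertWord [] w) := by
      rw [List.append_assoc]
      exact (kEquiv_bumpedWord_append_rowInsertWord .nil w).append_left u
    calc
      largeCount m (k + 1) w
        = (rowInsertWord [] w).countP (m < ·) + largeCount m k (bumpedWord [] w) :=
          largeCount_succ m k w
      _ ≤ (rowInsertWord [] w).countP (m < ·) + largeCount m k (u ++ bumpedWord [] w) := by
          gcongr
          exact ih _
      _ ≤ largeCount m (k + 1) (u ++ bumpedWord [] w ++ rowInsertWord [] w) :=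
          countP_add_largeCount_le m k _ (pairwise_rowInsertWord .nil w)
      _ = largeCount m (k + 1) (u ++ w) := (hw.largeCount_eq m (k + 1)).symm

theorem countP_lt_eq_zero_iff : u.countP (m < ·) = 0 ↔ ∀ x ∈ u, x ≤ m := by
  simp only [List.countP_eq_zero, decide_eq_true_eq, not_lt]

theorem countP_rowInsertWord_lt (hR : R.Pairwise (· ≤ ·)) (hu : ∀ x ∈ u, x ≤ m) (hmu : m ∈ u)
    (hpos : 0 < R.countP (m < ·)) : (rowInsertWord R u).countP (m < ·) < R.countP (m < ·) := by
  have hcount := countP_bumpedWord_add_countP_rowInsertWord (m < ·) R u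
  have hu_zero := countP_lt_eq_zero_iff.mpr hu
  have hbumped : 0 < (bumpedWord R u).countP (m < ·) := by
    obtain ⟨z, hz, hmz⟩ := List.countP_pos_iff.mp hpos
    obtain ⟨e, he, hme⟩ := exists_mem_bumpedWord_lt hR hz hmu (of_decide_eq_true hmz)
    exact List.countP_pos_iff.mpr ⟨e, he, decide_eq_true hme⟩
  omega

-- The witness `j` is the position, counted from one, of the first row with a large entry.
theorem exists_largeCount_append_lt (hk : k ≤ m + 1) (hu : ∀ x ∈ u, x ≤ m)
    (hdescent : (descent m k).Sublist u) (hw : 0 < largeCount m k w) :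
    ∃ j, largeCount m j (w ++ u) < largeCount m j w := by
  induction k generalizing u w with
  | zero => simp [largeCount] at hw
  | succ k ih =>
    have hrow : (rowInsertWord [] w).Pairwise (· ≤ ·) := pairwise_rowInsertWord .nil w
    rcases Nat.eq_zero_or_pos ((rowInsertWord [] w).countP (m < ·)) with hzero | hpos
    · have hcount := countP_bumpedWord_add_countP_rowInsertWord (m < ·) (rowInsertWord [] w) u
      have hu_zero := countP_lt_eq_zero_iff.mpr hu
      have hbumped : ∀ x ∈ bumpedWord (rowInsertWord [] w) u, x ≤ m :=
        countP_lt_eq_zero_iff.mp (by omega)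
      rw [largeCount_succ, hzero, zero_add] at hw
      obtain ⟨j, hj⟩ := ih (by omega) hbumped
        (descent_sublist_bumpedWord hrow (by omega) hdescent) hw
      refine ⟨j + 1, ?_⟩
      rw [largeCount_succ, largeCount_succ, rowInsertWord_append, bumpedWord_append]
      omega
    · have hm : m ∈ u := hdescent.subset (mem_descent_succ m k)
      refine ⟨1, ?_⟩
      simpa [largeCount, row_zero, rowInsertWord_append] using
        countP_rowInsertWord_lt hrow hu hm hpos

end Plactic

open Plactic in
theorem stmt_2 (u w : List ℕ) (hu : ∀ x ∈ u, 0 < x) (hw : ∀ x ∈ w, 0 < x)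
    (m k : ℕ) (hm : m = u.foldr max 0)
    (hsub : ((List.range k).map (fun i => m - i)).Sublist u)
    (hcent : w ∈ Cent u) :
    ∀ i < k, ∀ x ∈ row w i, x ≤ m := by
  have hk : k ≤ m := by
    by_contra! hmk
    have hpos := hu (m - m) (hsub.subset (List.mem_map.mpr ⟨m, List.mem_range.mpr hmk, rfl⟩))
    omega
  have hmax : ∀ x ∈ u, x ≤ m := fun x hx => hm ▸ List.le_max_of_le hx le_rfl
  by_contra! hlarge
  obtain ⟨j, hj⟩ := exists_largeCount_append_lt (hk.trans m.le_succ) hmax hsub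
    (largeCount_pos.mpr hlarge)
  exact (largeCount_le_append_left m j u w).not_gt (hcent.largeCount_eq m j ▸ hj)
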